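/- arXiv:2601.15157 — 2 statements merged into one kernel-verified Lean document; each statement's English description precedes it below -/
import Mathlib

section
/- Let K ≥ 0 and N ≥ 1 be integers and let f : [0,∞) → ℝ be locally integrable. Then f ∈ ℱ_w^{K,N} if and only if ℒ^K f ∈ ℛ_w^N. -/
open MeasureTheory Real

/-- The primitive operator `𝒫f(x) = ∫₀ˣ f(s) ds`. -/
noncomputable def Pop (f : ℝ → ℝ) : ℝ → ℝ := fun x => ∫ s in (0:ℝ)..x, f s

/-- The operator `ℒf = f - 𝒫f`. -/
noncomputable def Lop (f : ℝ → ℝ) : ℝ → ℝ := fun x => f x - Pop f x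

/-- `f ∈ ℱ_w^{K,N}`: there is a polynomial `p` of degree `< K` and `c ≥ 0` with
`∫₀^ℓ |f(s) - p(s)eˢ| ds ≤ c(ℓ+1)^{N-1} e^{ℓ/2}` for all `ℓ ≥ 0`.  (For `K = 0` this forces
`p = 0`, so `ℛ_w^N = ℱ_w^{0,N}` is the class of weak Friedman–Ramanujan remainders.) -/
def MemFRw (K N : ℕ) (f : ℝ → ℝ) : Prop :=
  ∃ p : Polynomial ℝ, p.degree < (K : WithBot ℕ) ∧
    ∃ c : ℝ, 0 ≤ c ∧ ∀ ℓ : ℝ, 0 ≤ ℓ →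
      (∫ s in (0:ℝ)..ℓ, |f s - Polynomial.eval s p * Real.exp s|) ≤
        c * (ℓ + 1) ^ (N - 1) * Real.exp (ℓ / 2)

/-!
Write `f = p eˢ + r` with `r` a remainder. Integration by parts gives
`ℒ((q + q') eˢ) = q' eˢ + q(0)`, and both `p = q + q'` and `q' = p` can be solved for a polynomial
`q`; so, up to constants (which are remainders), `ℒ` lowers the degree of the polynomial part by
exactly one. It remains to see that `ℒ` maps remainders to remainders, and that conversely `h` is a
remainder up to a multiple of `eˣ` when `ℒh` is. For the latter, `𝒫𝒫h` solves `y' = y + 𝒫ℒh`, hence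
`h = ℒh + 𝒫ℒh + eˣ ∫₀ˣ e⁻ˢ 𝒫ℒh(s) ds`. Since `𝒫ℒh` grows more slowly than `eˣ`, the last term is
`A eˣ - eˣ ∫ₓ^∞ e⁻ˢ 𝒫ℒh(s) ds` with a convergent integral `A = ∫₀^∞ e⁻ˢ 𝒫ℒh(s) ds`.
-/

open Set Polynomial

section Operators

variable {f g : ℝ → ℝ} {x : ℝ}

lemma intervalIntegrable_of_locallyIntegrableOn_Ici {E : Type*} [NormedAddCommGroup E]
    {f : ℝ → E} {a b : ℝ} (hf : LocallyIntegrableOn f (Ici a)) (hab : a ≤ b) :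
    IntervalIntegrable f volume a b := by
  rw [intervalIntegrable_iff_integrableOn_Icc_of_le hab]
  exact hf.integrableOn_compact_subset Icc_subset_Ici_self isCompact_Icc

lemma continuousOn_Pop (hf : LocallyIntegrableOn f (Ici 0)) : ContinuousOn (Pop f) (Ici 0) := by
  intro x (hx : 0 ≤ x)
  have hcont : ContinuousOn (Pop f) (Icc 0 (x + 1)) := by
    rw [← uIcc_of_le (by positivity)]
    exact intervalIntegral.continuousOn_primitive_interval'
      (intervalIntegrable_of_locallyIntegrableOn_Ici hf (by positivity)) left_mem_uIcc
  refine (hcont x ⟨hx, by simp⟩).mono_of_mem_nhdsWithin ?_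
  exact Filter.mem_of_superset (inter_mem_nhdsWithin _ (Iio_mem_nhds (lt_add_one x)))
    fun y hy => ⟨hy.1, hy.2.le⟩

lemma locallyIntegrableOn_Pop (hf : LocallyIntegrableOn f (Ici 0)) :
    LocallyIntegrableOn (Pop f) (Ici 0) :=
  (continuousOn_Pop hf).locallyIntegrableOn measurableSet_Ici

lemma locallyIntegrableOn_Lop (hf : LocallyIntegrableOn f (Ici 0)) :
    LocallyIntegrableOn (Lop f) (Ici 0) :=
  hf.sub (locallyIntegrableOn_Pop hf)

lemma locallyIntegrableOn_Lop_iterate (hf : LocallyIntegrableOn f (Ici 0)) (K : ℕ) :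
    LocallyIntegrableOn (Lop^[K] f) (Ici 0) := by
  induction K generalizing f with
  | zero => exact hf
  | succ _ ih => exact ih (locallyIntegrableOn_Lop hf)

lemma hasDerivAt_Pop (hf : ContinuousOn f (Ici 0)) (hx : 0 < x) : HasDerivAt (Pop f) (f x) x :=
  intervalIntegral.integral_hasDerivAt_right
    (intervalIntegrable_of_locallyIntegrableOn_Ici (hf.locallyIntegrableOn measurableSet_Ici) hx.le)
    ((hf.mono Ioi_subset_Ici_self).stronglyMeasurableAtFilter isOpen_Ioi x hx)
    (hf.continuousAt (Ici_mem_nhds hx))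

lemma Pop_sub (hf : LocallyIntegrableOn f (Ici 0)) (hg : LocallyIntegrableOn g (Ici 0))
    (hx : 0 ≤ x) : Pop (fun s => f s - g s) x = Pop f x - Pop g x :=
  intervalIntegral.integral_sub (intervalIntegrable_of_locallyIntegrableOn_Ici hf hx)
    (intervalIntegrable_of_locallyIntegrableOn_Ici hg hx)

lemma Lop_sub (hf : LocallyIntegrableOn f (Ici 0)) (hg : LocallyIntegrableOn g (Ici 0))
    (hx : 0 ≤ x) : Lop (fun s => f s - g s) x = Lop f x - Lop g x := by
  simp only [Lop, Pop_sub hf hg hx]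
  ring

lemma integral_exp_neg_mul_Pop_Lop (hf : LocallyIntegrableOn f (Ici 0)) (hx : 0 ≤ x) :
    ∫ s in (0 : ℝ)..x, exp (-s) * Pop (Lop f) s = exp (-x) * Pop (Pop f) x := by
  have hPf := locallyIntegrableOn_Pop hf
  have hderiv : ∀ y ∈ Ioo 0 x,
      HasDerivAt (fun s => exp (-s) * Pop (Pop f) s) (exp (-y) * Pop (Lop f) y) y := by
    intro y hy
    refine ((hasDerivAt_neg y).exp.mul (hasDerivAt_Pop (continuousOn_Pop hf) hy.1)).congr_deriv ?_
    rw [show Pop (Lop f) y = Pop f y - Pop (Pop f) y from Pop_sub hf hPf hy.1.le]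
    ring
  have hcont : ContinuousOn (fun s => exp (-s) * Pop (Pop f) s) (Ici 0) :=
    ContinuousOn.mul (by fun_prop) (continuousOn_Pop hPf)
  have hcont' : ContinuousOn (fun s => exp (-s) * Pop (Lop f) s) (Ici 0) :=
    ContinuousOn.mul (by fun_prop) (continuousOn_Pop (locallyIntegrableOn_Lop hf))
  rw [intervalIntegral.integral_eq_sub_of_hasDerivAt_of_le hx (hcont.mono Icc_subset_Ici_self)
    hderiv (intervalIntegrable_of_locallyIntegrableOn_Ici
      (hcont'.locallyIntegrableOn measurableSet_Ici) hx)]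
  simp [Pop]

lemma eq_Lop_add_Pop_Lop_add_exp_mul_integral (hf : LocallyIntegrableOn f (Ici 0)) (hx : 0 ≤ x) :
    f x = Lop f x + Pop (Lop f) x + exp x * ∫ s in (0 : ℝ)..x, exp (-s) * Pop (Lop f) s := by
  have hPL : Pop (Lop f) x = Pop f x - Pop (Pop f) x :=
    Pop_sub hf (locallyIntegrableOn_Pop hf) hx
  rw [integral_exp_neg_mul_Pop_Lop hf hx, ← mul_assoc, ← exp_add, hPL, Lop]
  simp

end Operators

section Polynomials

lemma degree_derivative_lt_of_degree_lt_succ {R : Type*} [Semiring R] {K : ℕ} {p : R[X]}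
    (hp : p.degree < (K + 1 : ℕ)) : (derivative p).degree < K := by
  rw [degree_lt_iff_coeff_zero] at hp ⊢
  intro m hm
  rw [coeff_derivative, hp (m + 1) (by lia), zero_mul]

lemma exists_add_derivative_eq {R : Type*} [Ring R] {K : ℕ} {p : R[X]} (hp : p.degree < K) :
    ∃ q : R[X], q.degree < K ∧ q + derivative q = p := by
  induction K generalizing p with
  | zero =>
    have hp0 : p = 0 := by simpa using hp
    exact ⟨0, by simp, by simp [hp0]⟩
  | succ K ih =>
    obtain ⟨q, hq, hqp⟩ := ih (degree_derivative_lt_of_degree_lt_succ hp)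
    have hq' : q.degree < (K + 1 : ℕ) := hq.trans (by exact_mod_cast K.lt_succ_self)
    refine ⟨p - q, (degree_sub_le p q).trans_lt (max_lt hp hq'), ?_⟩
    rw [derivative_sub, ← hqp]
    abel

lemma exists_derivative_eq {k : Type*} [Field k] [CharZero k] {K : ℕ} {p : k[X]}
    (hp : p.degree < K) : ∃ q : k[X], q.degree < (K + 1 : ℕ) ∧ derivative q = p := by
  refine ⟨p.sum fun i a => monomial (i + 1) (a / (i + 1)), ?_, ?_⟩
  · rw [← mem_degreeLT]
    refine Submodule.sum_mem _ fun i hi => mem_degreeLT.2 ((degree_monomial_le _ _).trans_lt ?_)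
    have hiK : (i : WithBot ℕ) < K := (le_degree_of_mem_supp i hi).trans_lt hp
    exact_mod_cast Nat.succ_lt_succ (by exact_mod_cast hiK)
  · have hmonomial (i : ℕ) (a : k) :
        derivative (monomial (i + 1) (a / (i + 1))) = monomial i a := by
      rw [derivative_monomial, Nat.cast_add_one, div_mul_cancel₀ _ (Nat.cast_add_one_ne_zero i),
        Nat.add_sub_cancel]
    simp only [Polynomial.sum, derivative_sum, hmonomial]
    exact p.sum_monomial_eq

lemma locallyIntegrableOn_eval_mul_exp (p : ℝ[X]) (S : Set ℝ) :
    LocallyIntegrableOn (fun s => p.eval s * exp s) S :=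
  (Continuous.locallyIntegrable (by fun_prop)).locallyIntegrableOn S

lemma Pop_add_derivative_mul_exp (q : ℝ[X]) (x : ℝ) :
    Pop (fun s => (q + derivative q).eval s * exp s) x = q.eval x * exp x - q.eval 0 := by
  have hderiv (y : ℝ) :
      HasDerivAt (fun s => q.eval s * exp s) ((q + derivative q).eval y * exp y) y := by
    refine ((q.hasDerivAt y).mul (Real.hasDerivAt_exp y)).congr_deriv ?_
    rw [eval_add]
    ring
  rw [Pop, intervalIntegral.integral_eq_sub_of_hasDerivAt (fun y _ => hderiv y)
    (Continuous.intervalIntegrable (by fun_prop) _ _)]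
  simp

lemma Lop_sub_add_derivative_mul_exp {f : ℝ → ℝ} (hf : LocallyIntegrableOn f (Ici 0)) (q : ℝ[X])
    {x : ℝ} (hx : 0 ≤ x) :
    Lop (fun s => f s - (q + derivative q).eval s * exp s) x =
      Lop f x - (derivative q).eval x * exp x - q.eval 0 := by
  rw [Lop_sub hf (locallyIntegrableOn_eval_mul_exp _ _) hx]
  nth_rw 2 [Lop]
  rw [Pop_add_derivative_mul_exp, eval_add]
  ring

end Polynomials

/-- Weights on `[0, ∞)` whose growth lies strictly between that of constants and that of `eˣ`, in an
averaged sense: `w` is bounded below, dominates its own primitive, and `e⁻ˢ w(s)` dominates its own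
tail integral. These are the properties of `(x + 1)^(N - 1) e^(x/2)` on which the theory of
Friedman–Ramanujan remainders rests. -/
structure IsIntermediateWeight (w : ℝ → ℝ) : Prop where
  exists_pos_le : ∃ m > 0, ∀ x, 0 ≤ x → m ≤ w x
  exists_integral_le : ∃ C, ∀ x, 0 ≤ x → ∫ s in (0 : ℝ)..x, w s ≤ C * w x
  integrableOn_exp_neg_mul : IntegrableOn (fun s => exp (-s) * w s) (Ioi 0)
  exists_tail_le : ∃ C, ∀ x, 0 ≤ x → exp x * ∫ s in Ioi x, exp (-s) * w s ≤ C * w x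

/-- Weak remainders relative to the weight `w`: locally integrable functions on `[0, ∞)` with
`∫₀^ℓ |r| = O(w(ℓ))`, uniformly in `ℓ ≥ 0`. -/
structure IsWeakRemainder (w r : ℝ → ℝ) : Prop where
  locallyIntegrableOn : LocallyIntegrableOn r (Ici 0)
  exists_integral_abs_le : ∃ c, ∀ ℓ, 0 ≤ ℓ → ∫ s in (0 : ℝ)..ℓ, |r s| ≤ c * w ℓ

/-- The weak Friedman–Ramanujan class with an arbitrary weight `w`: functions of the form
`p(s) eˢ + r(s)` with `p` a polynomial of degree `< K` and `r` a weak remainder relative to `w`. -/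
def MemWeightedFR (w : ℝ → ℝ) (K : ℕ) (f : ℝ → ℝ) : Prop :=
  ∃ p : ℝ[X], p.degree < K ∧ IsWeakRemainder w fun s => f s - p.eval s * exp s

namespace IsIntermediateWeight

variable {w : ℝ → ℝ}

lemma pos (hw : IsIntermediateWeight w) {x : ℝ} (hx : 0 ≤ x) : 0 < w x :=
  let ⟨_, hm, hmw⟩ := hw.exists_pos_le
  hm.trans_le (hmw x hx)

lemma nonneg_of_abs_le (hw : IsIntermediateWeight w) {u : ℝ → ℝ} {c : ℝ}
    (hu : ∀ x, 0 ≤ x → |u x| ≤ c * w x) : 0 ≤ c :=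
  nonneg_of_mul_nonneg_left ((abs_nonneg _).trans (hu 0 le_rfl)) (hw.pos le_rfl)

lemma intervalIntegrable (hw : IsIntermediateWeight w) {x : ℝ} (hx : 0 ≤ x) :
    IntervalIntegrable w volume 0 x := by
  have hexp : IntervalIntegrable (fun s => exp (-s) * w s) volume 0 x :=
    (intervalIntegrable_iff_integrableOn_Ioc_of_le hx).2
      (hw.integrableOn_exp_neg_mul.mono_set Ioc_subset_Ioi_self)
  refine (hexp.continuousOn_mul Real.continuous_exp.continuousOn).congr fun s _ => ?_
  simp only [← mul_assoc, ← exp_add, add_neg_cancel, exp_zero, one_mul]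

end IsIntermediateWeight

namespace IsWeakRemainder

variable {w r r₁ r₂ : ℝ → ℝ}

protected lemma add (h₁ : IsWeakRemainder w r₁) (h₂ : IsWeakRemainder w r₂) :
    IsWeakRemainder w fun x => r₁ x + r₂ x := by
  obtain ⟨c₁, hc₁⟩ := h₁.exists_integral_abs_le
  obtain ⟨c₂, hc₂⟩ := h₂.exists_integral_abs_le
  refine ⟨h₁.locallyIntegrableOn.add h₂.locallyIntegrableOn, c₁ + c₂, fun ℓ hℓ => ?_⟩
  have hr₁ := intervalIntegrable_of_locallyIntegrableOn_Ici h₁.locallyIntegrableOn hℓ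
  have hr₂ := intervalIntegrable_of_locallyIntegrableOn_Ici h₂.locallyIntegrableOn hℓ
  calc ∫ s in (0 : ℝ)..ℓ, |r₁ s + r₂ s|
      ≤ ∫ s in (0 : ℝ)..ℓ, (|r₁ s| + |r₂ s|) :=
        intervalIntegral.integral_mono_on hℓ (hr₁.add hr₂).abs (hr₁.abs.add hr₂.abs)
          fun s _ => abs_add_le (r₁ s) (r₂ s)
    _ = (∫ s in (0 : ℝ)..ℓ, |r₁ s|) + ∫ s in (0 : ℝ)..ℓ, |r₂ s| :=
        intervalIntegral.integral_add hr₁.abs hr₂.abs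
    _ ≤ c₁ * w ℓ + c₂ * w ℓ := add_le_add (hc₁ ℓ hℓ) (hc₂ ℓ hℓ)
    _ = (c₁ + c₂) * w ℓ := by ring

protected lemma neg (h : IsWeakRemainder w r) : IsWeakRemainder w fun x => -r x :=
  ⟨h.locallyIntegrableOn.neg, by simpa only [abs_neg] using h.exists_integral_abs_le⟩

protected lemma sub (h₁ : IsWeakRemainder w r₁) (h₂ : IsWeakRemainder w r₂) :
    IsWeakRemainder w fun x => r₁ x - r₂ x := by
  simpa only [sub_eq_add_neg] using h₁.add h₂.neg

protected lemma congr (h : IsWeakRemainder w r₁) (heq : EqOn r₁ r₂ (Ici 0)) :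
    IsWeakRemainder w r₂ := by
  obtain ⟨c, hc⟩ := h.exists_integral_abs_le
  refine ⟨h.locallyIntegrableOn.congr (ae_restrict_of_forall_mem measurableSet_Ici heq), c,
    fun ℓ hℓ => ?_⟩
  have hint : ∫ s in (0 : ℝ)..ℓ, |r₂ s| = ∫ s in (0 : ℝ)..ℓ, |r₁ s| :=
    intervalIntegral.integral_congr fun s hs => by
      rw [uIcc_of_le hℓ] at hs
      simp only [heq hs.1]
  exact hint ▸ hc ℓ hℓ

lemma of_abs_le (hw : IsIntermediateWeight w) (hr : LocallyIntegrableOn r (Ici 0)) {c : ℝ}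
    (hrc : ∀ x, 0 ≤ x → |r x| ≤ c * w x) : IsWeakRemainder w r := by
  obtain ⟨C, hC⟩ := hw.exists_integral_le
  have hc : 0 ≤ c := hw.nonneg_of_abs_le hrc
  refine ⟨hr, c * C, fun ℓ hℓ => ?_⟩
  calc ∫ s in (0 : ℝ)..ℓ, |r s|
      ≤ ∫ s in (0 : ℝ)..ℓ, c * w s :=
        intervalIntegral.integral_mono_on hℓ
          (intervalIntegrable_of_locallyIntegrableOn_Ici hr hℓ).abs
          ((hw.intervalIntegrable hℓ).const_mul c) fun s hs => hrc s hs.1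
    _ = c * ∫ s in (0 : ℝ)..ℓ, w s := intervalIntegral.integral_const_mul _ _
    _ ≤ c * (C * w ℓ) := mul_le_mul_of_nonneg_left (hC ℓ hℓ) hc
    _ = c * C * w ℓ := (mul_assoc _ _ _).symm

lemma const (hw : IsIntermediateWeight w) (a : ℝ) : IsWeakRemainder w fun _ => a := by
  obtain ⟨m, hm, hmw⟩ := hw.exists_pos_le
  refine of_abs_le hw (locallyIntegrableOn_const a) (c := |a| / m) fun x hx => ?_
  rw [div_mul_eq_mul_div, le_div_iff₀ hm]
  exact mul_le_mul_of_nonneg_left (hmw x hx) (abs_nonneg a)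

lemma exists_abs_Pop_le (h : IsWeakRemainder w r) : ∃ c, ∀ x, 0 ≤ x → |Pop r x| ≤ c * w x :=
  h.exists_integral_abs_le.imp fun _ hc x hx =>
    (intervalIntegral.abs_integral_le_integral_abs hx).trans (hc x hx)

protected lemma Pop (hw : IsIntermediateWeight w) (h : IsWeakRemainder w r) :
    IsWeakRemainder w (Pop r) :=
  let ⟨_, hc⟩ := h.exists_abs_Pop_le
  of_abs_le hw (locallyIntegrableOn_Pop h.locallyIntegrableOn) hc

protected lemma Lop (hw : IsIntermediateWeight w) (h : IsWeakRemainder w r) :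
    IsWeakRemainder w (Lop r) :=
  h.sub (h.Pop hw)

end IsWeakRemainder

section Resolvent

variable {w u h : ℝ → ℝ} {c : ℝ}

lemma norm_exp_mul_le {t y b c : ℝ} (hy : |y| ≤ c * b) : ‖exp t * y‖ ≤ c * (exp t * b) := by
  rw [norm_mul, norm_of_nonneg (exp_nonneg t), norm_eq_abs, mul_left_comm]
  exact mul_le_mul_of_nonneg_left hy (exp_nonneg t)

lemma integrableOn_exp_neg_mul_of_abs_le (hw : IsIntermediateWeight w)
    (hu : LocallyIntegrableOn u (Ici 0)) (huc : ∀ x, 0 ≤ x → |u x| ≤ c * w x) :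
    IntegrableOn (fun s => exp (-s) * u s) (Ioi 0) := by
  refine (hw.integrableOn_exp_neg_mul.const_mul c).mono' ?_ ?_
  · exact (Real.continuous_exp.comp continuous_neg).aestronglyMeasurable.mul
      (hu.mono_set Ioi_subset_Ici_self).aestronglyMeasurable
  · refine ae_restrict_of_forall_mem measurableSet_Ioi fun s (hs : 0 < s) => ?_
    exact norm_exp_mul_le (huc s hs.le)

lemma exists_exp_mul_abs_integral_Ioi_le (hw : IsIntermediateWeight w)
    (huc : ∀ x, 0 ≤ x → |u x| ≤ c * w x) :
    ∃ C, ∀ x, 0 ≤ x → exp x * |∫ s in Ioi x, exp (-s) * u s| ≤ C * w x := by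
  obtain ⟨C, hC⟩ := hw.exists_tail_le
  have hc : 0 ≤ c := hw.nonneg_of_abs_le huc
  refine ⟨c * C, fun x hx => ?_⟩
  have htail : |∫ s in Ioi x, exp (-s) * u s| ≤ ∫ s in Ioi x, c * (exp (-s) * w s) := by
    rw [← norm_eq_abs]
    refine norm_integral_le_of_norm_le
      ((hw.integrableOn_exp_neg_mul.mono_set (Ioi_subset_Ioi hx)).const_mul c)
      (ae_restrict_of_forall_mem measurableSet_Ioi fun s (hs : x < s) => ?_)
    exact norm_exp_mul_le (huc s (hx.trans hs.le))
  calc exp x * |∫ s in Ioi x, exp (-s) * u s|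
      ≤ exp x * ∫ s in Ioi x, c * (exp (-s) * w s) :=
        mul_le_mul_of_nonneg_left htail (exp_nonneg x)
    _ = c * (exp x * ∫ s in Ioi x, exp (-s) * w s) := by rw [integral_const_mul]; ring
    _ ≤ c * (C * w x) := mul_le_mul_of_nonneg_left (hC x hx) hc
    _ = c * C * w x := (mul_assoc _ _ _).symm

lemma exists_isWeakRemainder_exp_mul_integral_sub (hw : IsIntermediateWeight w)
    (hu : LocallyIntegrableOn u (Ici 0)) (huc : ∀ x, 0 ≤ x → |u x| ≤ c * w x) :
    ∃ A, IsWeakRemainder w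
      fun x => exp x * (∫ s in (0 : ℝ)..x, exp (-s) * u s) - A * exp x := by
  have hint := integrableOn_exp_neg_mul_of_abs_le hw hu huc
  obtain ⟨C, hC⟩ := exists_exp_mul_abs_integral_Ioi_le hw huc
  refine ⟨∫ s in Ioi (0 : ℝ), exp (-s) * u s, .of_abs_le hw ?_ (c := C) fun x hx => ?_⟩
  · have hloc : LocallyIntegrableOn (fun s => exp (-s) * u s) (Ici 0) :=
      ((integrableOn_Ici_iff_integrableOn_Ioi).2 hint).locallyIntegrableOn
    refine ContinuousOn.locallyIntegrableOn ?_ measurableSet_Ici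
    exact (ContinuousOn.mul (by fun_prop) (continuousOn_Pop hloc)).sub (by fun_prop)
  · have hsplit := intervalIntegral.integral_interval_add_Ioi hint
      (hint.mono_set (Ioi_subset_Ioi hx))
    rw [← hsplit, mul_comm _ (exp x), ← mul_sub, sub_add_cancel_left, abs_mul, abs_neg, abs_exp]
    exact hC x hx

lemma exists_isWeakRemainder_sub_mul_exp (hw : IsIntermediateWeight w)
    (hh : LocallyIntegrableOn h (Ici 0)) (hLh : IsWeakRemainder w (Lop h)) :
    ∃ A, IsWeakRemainder w fun x => h x - A * exp x := by
  have hPLh := hLh.Pop hw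
  obtain ⟨c, hc⟩ := hLh.exists_abs_Pop_le
  obtain ⟨A, hA⟩ := exists_isWeakRemainder_exp_mul_integral_sub hw hPLh.locallyIntegrableOn hc
  refine ⟨A, ((hLh.add hPLh).add hA).congr fun x (hx : 0 ≤ x) => ?_⟩
  dsimp only
  rw [eq_Lop_add_Pop_Lop_add_exp_mul_integral hh hx]
  ring

end Resolvent

section WeightedClass

variable {w f : ℝ → ℝ}

lemma isWeakRemainder_Lop_sub_iff (hw : IsIntermediateWeight w)
    (hf : LocallyIntegrableOn f (Ici 0)) (q : ℝ[X]) :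
    IsWeakRemainder w (Lop fun s => f s - (q + derivative q).eval s * exp s) ↔
      IsWeakRemainder w fun s => Lop f s - (derivative q).eval s * exp s := by
  have hLop (x : ℝ) (hx : 0 ≤ x) := Lop_sub_add_derivative_mul_exp hf q hx
  have hconst := IsWeakRemainder.const hw (q.eval 0)
  refine ⟨fun h => (h.add hconst).congr fun x hx => ?_,
    fun h => (h.sub hconst).congr fun x hx => (hLop x hx).symm⟩
  simp only [hLop x hx, sub_add_cancel]

lemma memWeightedFR_succ_iff (hw : IsIntermediateWeight w) (hf : LocallyIntegrableOn f (Ici 0))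
    (K : ℕ) : MemWeightedFR w (K + 1) f ↔ MemWeightedFR w K (Lop f) := by
  constructor
  · rintro ⟨p, hp, hr⟩
    obtain ⟨q, hq, rfl⟩ := exists_add_derivative_eq hp
    exact ⟨derivative q, degree_derivative_lt_of_degree_lt_succ hq,
      (isWeakRemainder_Lop_sub_iff hw hf q).1 (hr.Lop hw)⟩
  · rintro ⟨p, hp, hr⟩
    obtain ⟨q, hq, rfl⟩ := exists_derivative_eq hp
    have hLop := (isWeakRemainder_Lop_sub_iff hw hf q).2 hr
    obtain ⟨A, hA⟩ := exists_isWeakRemainder_sub_mul_exp hw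
      (hf.sub (locallyIntegrableOn_eval_mul_exp (q + derivative q) _)) hLop
    refine ⟨q + derivative q + C A, ?_, hA.congr fun x _ => ?_⟩
    · simp only [← mem_degreeLT] at hq ⊢
      refine add_mem (add_mem hq ?_) ?_
      · exact mem_degreeLT.2 (degree_derivative_le.trans_lt (mem_degreeLT.1 hq))
      · exact mem_degreeLT.2 (degree_C_le.trans_lt (by exact_mod_cast K.succ_pos))
    · simp only [eval_add, eval_C, Pi.sub_apply]
      ring

theorem memFRw_iff_Lop_iterate_memRemainderW_general (hw : IsIntermediateWeight w)
    (hf : LocallyIntegrableOn f (Ici 0)) (K : ℕ) :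
    MemWeightedFR w K f ↔ MemWeightedFR w 0 (Lop^[K] f) := by
  induction K generalizing f with
  | zero => rfl
  | succ K ih =>
    rw [memWeightedFR_succ_iff hw hf, ih (locallyIntegrableOn_Lop hf),
      Function.iterate_succ_apply]

end WeightedClass

section Translation

variable {E : Type*} [NormedAddCommGroup E] {φ : ℝ → E}

lemma integrableOn_comp_sub_right_Ioi (hφ : IntegrableOn φ (Ioi 0)) (x : ℝ) :
    IntegrableOn (fun s => φ (s - x)) (Ioi x) := by
  have hpreimage := ((measurePreserving_sub_right volume x).integrableOn_comp_preimage
    (measurableEmbedding_subRight x)).2 hφ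
  rwa [preimage_sub_const_Ioi, zero_add] at hpreimage

lemma integral_comp_sub_right_Ioi [NormedSpace ℝ E] (φ : ℝ → E) (x : ℝ) :
    ∫ s in Ioi x, φ (s - x) = ∫ t in Ioi 0, φ t := by
  have hpreimage := (measurePreserving_sub_right volume x).setIntegral_preimage_emb
    (measurableEmbedding_subRight x) φ (Ioi 0)
  rwa [preimage_sub_const_Ioi, zero_add] at hpreimage

end Translation

section PowMulExp

variable {a : ℝ}

lemma integral_pow_mul_exp_le (n : ℕ) (ha : 0 < a) {x : ℝ} (hx : 0 ≤ x) :
    ∫ s in (0 : ℝ)..x, (s + 1) ^ n * exp (a * s) ≤ a⁻¹ * ((x + 1) ^ n * exp (a * x)) := by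
  calc ∫ s in (0 : ℝ)..x, (s + 1) ^ n * exp (a * s)
      ≤ ∫ s in (0 : ℝ)..x, (x + 1) ^ n * exp (a * s) := by
        refine intervalIntegral.integral_mono_on hx
          (Continuous.intervalIntegrable (by fun_prop) _ _)
          (Continuous.intervalIntegrable (by fun_prop) _ _) fun s ⟨hs, hsx⟩ => ?_
        gcongr
    _ = (x + 1) ^ n * (a⁻¹ * (exp (a * x) - 1)) := by
        rw [intervalIntegral.integral_const_mul,
          intervalIntegral.integral_comp_mul_left exp ha.ne', integral_exp]
        simp
    _ ≤ (x + 1) ^ n * (a⁻¹ * exp (a * x)) := by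
        gcongr
        exact sub_le_self _ zero_le_one
    _ = a⁻¹ * ((x + 1) ^ n * exp (a * x)) := by ring

lemma integrableOn_add_one_pow_mul_exp_neg (n : ℕ) {b : ℝ} (hb : 0 < b) :
    IntegrableOn (fun t => (t + 1) ^ n * exp (-b * t)) (Ioi 0) := by
  refine integrable_of_isBigO_exp_neg (half_pos hb) (by fun_prop) ?_
  have hpow : (fun t : ℝ => (t + 1) ^ n) =O[Filter.atTop] fun t => exp (b / 2 * (t + 1)) :=
    ((isLittleO_pow_exp_pos_mul_atTop n (half_pos hb)).comp_tendsto
      (Filter.tendsto_atTop_add_const_right _ 1 Filter.tendsto_id)).isBigO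
  have hexp (t : ℝ) :
      exp (b / 2 * (t + 1)) * exp (-b * t) = exp (b / 2) * exp (-(b / 2) * t) := by
    simp only [← exp_add]
    ring_nf
  refine (hpow.mul (Asymptotics.isBigO_refl (fun t => exp (-b * t)) _)).trans ?_
  simp only [hexp]
  exact Asymptotics.isBigO_const_mul_self _ _ _

lemma exp_neg_mul_pow_mul_exp_le (n : ℕ) (a : ℝ) {x s : ℝ} (hx : 0 ≤ x) (hxs : x ≤ s) :
    exp (-s) * ((s + 1) ^ n * exp (a * s)) ≤
      exp (-x) * ((x + 1) ^ n * exp (a * x)) * ((s - x + 1) ^ n * exp (-(1 - a) * (s - x))) := by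
  have hpow : (s + 1) ^ n ≤ (x + 1) ^ n * (s - x + 1) ^ n := by
    rw [← mul_pow]
    exact pow_le_pow_left₀ (by linarith) (by nlinarith) n
  have hexp : exp (-s) * exp (a * s) = exp (-x) * exp (a * x) * exp (-(1 - a) * (s - x)) := by
    simp only [← exp_add]
    ring_nf
  calc exp (-s) * ((s + 1) ^ n * exp (a * s))
      = (s + 1) ^ n * (exp (-s) * exp (a * s)) := by ring
    _ ≤ (x + 1) ^ n * (s - x + 1) ^ n * (exp (-s) * exp (a * s)) := by gcongr
    _ = _ := by rw [hexp]; ring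

lemma exists_exp_mul_integral_Ioi_pow_mul_exp_le (n : ℕ) (ha : a < 1) :
    ∃ C, ∀ x, 0 ≤ x →
      exp x * ∫ s in Ioi x, exp (-s) * ((s + 1) ^ n * exp (a * s)) ≤
        C * ((x + 1) ^ n * exp (a * x)) := by
  set φ : ℝ → ℝ := fun t => (t + 1) ^ n * exp (-(1 - a) * t)
  have hφ : IntegrableOn φ (Ioi 0) := integrableOn_add_one_pow_mul_exp_neg n (sub_pos.2 ha)
  refine ⟨∫ t in Ioi 0, φ t, fun x hx => ?_⟩
  have hle : ∫ s in Ioi x, exp (-s) * ((s + 1) ^ n * exp (a * s)) ≤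
      ∫ s in Ioi x, exp (-x) * ((x + 1) ^ n * exp (a * x)) * φ (s - x) := by
    refine integral_mono_of_nonneg ?_ ((integrableOn_comp_sub_right_Ioi hφ x).const_mul _) ?_
    · refine ae_restrict_of_forall_mem measurableSet_Ioi fun s (hs : x < s) => ?_
      have hs₀ : 0 ≤ s := hx.trans hs.le
      dsimp only [Pi.zero_apply]
      positivity
    · exact ae_restrict_of_forall_mem measurableSet_Ioi fun s hs =>
        exp_neg_mul_pow_mul_exp_le n a hx (le_of_lt hs)
  calc exp x * ∫ s in Ioi x, exp (-s) * ((s + 1) ^ n * exp (a * s))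
      ≤ exp x * (exp (-x) * ((x + 1) ^ n * exp (a * x)) * ∫ t in Ioi 0, φ t) := by
        rw [integral_const_mul, integral_comp_sub_right_Ioi] at hle
        exact mul_le_mul_of_nonneg_left hle (exp_nonneg x)
    _ = (∫ t in Ioi 0, φ t) * ((x + 1) ^ n * exp (a * x)) := by
        rw [exp_neg]
        field_simp

lemma isIntermediateWeight_pow_mul_exp (n : ℕ) (ha₀ : 0 < a) (ha₁ : a < 1) :
    IsIntermediateWeight fun x => (x + 1) ^ n * exp (a * x) where
  exists_pos_le := ⟨1, one_pos, fun x hx =>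
    one_le_mul_of_one_le_of_one_le (one_le_pow₀ (by linarith)) (one_le_exp (by positivity))⟩
  exists_integral_le := ⟨a⁻¹, fun _ => integral_pow_mul_exp_le n ha₀⟩
  integrableOn_exp_neg_mul := by
    refine (integrableOn_add_one_pow_mul_exp_neg n (sub_pos.2 ha₁)).congr_fun (fun s _ => ?_)
      measurableSet_Ioi
    dsimp only
    rw [mul_left_comm, ← exp_add]
    ring_nf
  exists_tail_le := exists_exp_mul_integral_Ioi_pow_mul_exp_le n ha₁

end PowMulExp

lemma memFRw_iff_memWeightedFR {f : ℝ → ℝ} (hf : LocallyIntegrableOn f (Ici 0)) (K N : ℕ) :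
    MemFRw K N f ↔ MemWeightedFR (fun x => (x + 1) ^ (N - 1) * exp (2⁻¹ * x)) K f := by
  simp only [MemFRw, div_eq_inv_mul, mul_assoc]
  refine exists_congr fun p => and_congr_right fun _ => ⟨fun ⟨c, _, hc⟩ => ?_, fun h => ?_⟩
  · exact ⟨hf.sub (locallyIntegrableOn_eval_mul_exp p _), c, hc⟩
  · obtain ⟨c, hc⟩ := h.exists_integral_abs_le
    exact ⟨c, by simpa using hc 0 le_rfl, hc⟩

/-- `f ∈ ℱ_w^{K,N}` if and only if `ℒ^K f ∈ ℛ_w^N = ℱ_w^{0,N}`. -/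
theorem memFRw_iff_Lop_iterate_memRemainderW (K N : ℕ) (hN : 1 ≤ N) (f : ℝ → ℝ)
    (hf : LocallyIntegrableOn f (Set.Ici (0:ℝ))) :
    MemFRw K N f ↔ MemFRw 0 N (Lop^[K] f) := by
  rw [memFRw_iff_memWeightedFR hf, memFRw_iff_memWeightedFR (locallyIntegrableOn_Lop_iterate hf K)]
  exact memFRw_iff_Lop_iterate_memRemainderW_general
    (isIntermediateWeight_pow_mul_exp (N - 1) (by norm_num) (by norm_num)) hf K
end

section
/- Let K₁, K₂ ≥ 0 and N₁, N₂ ≥ 1 be integers. If f₁ ∈ ℱ^{K₁,N₁} and f₂ ∈ ℱ^{K₂,N₂}, then the convolution f₁ * f₂ belongs to ℱ^{K,N} with K = K₁ + K₂ and N = N₁ + N₂. -/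
open MeasureTheory Real

/-- `f ∈ ℱ^{K,N}`: there is a polynomial `p` of degree `< K` and `c ≥ 0` with
`|f(ℓ) - p(ℓ)eˡ| ≤ c(ℓ+1)^{N-1} e^{ℓ/2}` for all `ℓ ≥ 0`. -/
def MemFR (K N : ℕ) (f : ℝ → ℝ) : Prop :=
  ∃ p : Polynomial ℝ, p.degree < (K : WithBot ℕ) ∧
    ∃ c : ℝ, 0 ≤ c ∧ ∀ ℓ : ℝ, 0 ≤ ℓ →
      |f ℓ - Polynomial.eval ℓ p * Real.exp ℓ| ≤ c * (ℓ + 1) ^ (N - 1) * Real.exp (ℓ / 2)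

/-- The convolution `f₁ * f₂(ℓ) = ∫₀^ℓ f₁(s) f₂(ℓ - s) ds`. -/
noncomputable def conv (f₁ f₂ : ℝ → ℝ) : ℝ → ℝ := fun ℓ => ∫ s in (0:ℝ)..ℓ, f₁ s * f₂ (ℓ - s)

/-! A function of the class is `f = p e^{aℓ} + r`, where the remainder `r` has the smaller rate
`b < a`. Expanding `f₁ * f₂` gives four pieces. The convolution of the two main terms is `e^{aℓ}`
times a convolution of polynomials. The convolution of the two remainders keeps the rate `b` and
gains one power of `ℓ + 1` from the length of the interval of integration. In the mixed term
`∫₀^ℓ r(s) p(ℓ - s) e^{a(ℓ - s)} ds` the integral may be extended to `[0, ∞)` because `b < a`. It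
then is a polynomial in `ℓ` times `e^{aℓ}`, whose coefficients are moments of `r(s) e^{-as}`, and
the added tail equals `∫₀^∞ r(ℓ + u) p(-u) e^{-au} du`, which is at most a constant times the bound
on `r(ℓ)` since `ℓ + u + 1 ≤ (ℓ + 1) (u + 1)`. -/

open Polynomial

/-- The exponential polynomial `x ↦ p(x) e^{ax}`, the shape of the main term of a
Friedman–Ramanujan function (there `a = 1`). -/
noncomputable def expPoly (a : ℝ) (p : ℝ[X]) : ℝ → ℝ := fun x => p.eval x * exp (a * x)

/-- `r` is of order `(x + 1)ⁿ e^{bx}` on `[0, ∞)`: the size condition on the remainder of a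
Friedman–Ramanujan function (there `b = 1 / 2`). -/
def ExpPolyBounded (b : ℝ) (n : ℕ) (r : ℝ → ℝ) : Prop :=
  ∃ c : ℝ, 0 ≤ c ∧ ∀ x : ℝ, 0 ≤ x → |r x| ≤ c * (x + 1) ^ n * exp (b * x)

/-- Friedman–Ramanujan functions with arbitrary rates: the main term is `p(x) e^{ax}` with
`deg p < K` and the remainder has order `(x + 1)ⁿ e^{bx}`. The class `ℱ^{K,N}` has `a = 1`,
`b = 1 / 2` and `n = N - 1`. -/
def HasExpPolyAsymptotics (a b : ℝ) (K n : ℕ) (f : ℝ → ℝ) : Prop :=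
  ∃ p : ℝ[X], p.degree < K ∧ ExpPolyBounded b n (f - expPoly a p)

lemma memFR_succ_iff {K n : ℕ} {f : ℝ → ℝ} :
    MemFR K (n + 1) f ↔ HasExpPolyAsymptotics 1 (1 / 2) K n f := by
  simp only [MemFR, HasExpPolyAsymptotics, ExpPolyBounded, expPoly, Pi.sub_apply, one_mul,
    one_div_mul_eq_div, Nat.add_sub_cancel]

lemma integral_Ioi_eq_integral_Ioi_zero_comp_add {E : Type*} [NormedAddCommGroup E]
    [NormedSpace ℝ E] (f : ℝ → E) (x : ℝ) :
    ∫ s in Set.Ioi x, f s = ∫ u in Set.Ioi 0, f (x + u) := by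
  have hpre : (x + ·) ⁻¹' Set.Ioi x = Set.Ioi 0 := by simp
  rw [← hpre, (measurePreserving_add_left volume x).setIntegral_preimage_emb
    (measurableEmbedding_addLeft x)]

section Convolution

variable {f f₁ f₂ g g₁ g₂ : ℝ → ℝ} {x : ℝ}

lemma conv_comm (f g : ℝ → ℝ) : conv f g = conv g f := by
  funext x
  have hflip := intervalIntegral.integral_comp_sub_left (a := 0) (b := x)
    (fun s => g s * f (x - s)) x
  simp only [sub_sub_cancel, sub_self, sub_zero] at hflip
  simp only [conv, ← hflip, mul_comm]

lemma conv_add_left (h₁ : IntervalIntegrable (fun s => f₁ s * g (x - s)) volume 0 x)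
    (h₂ : IntervalIntegrable (fun s => f₂ s * g (x - s)) volume 0 x) :
    conv (f₁ + f₂) g x = conv f₁ g x + conv f₂ g x := by
  simp only [conv, Pi.add_apply, add_mul, intervalIntegral.integral_add h₁ h₂]

lemma conv_add_right (h₁ : IntervalIntegrable (fun s => f s * g₁ (x - s)) volume 0 x)
    (h₂ : IntervalIntegrable (fun s => f s * g₂ (x - s)) volume 0 x) :
    conv f (g₁ + g₂) x = conv f g₁ x + conv f g₂ x := by
  simp only [conv, Pi.add_apply, mul_add, intervalIntegral.integral_add h₁ h₂]

lemma intervalIntegrable_mul_comp_sub {C : ℝ} (hx : 0 ≤ x)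
    (hf : LocallyIntegrableOn f (Set.Ici 0)) (hg : LocallyIntegrableOn g (Set.Ici 0))
    (hfC : ∀ s ∈ Set.Icc 0 x, |f s| ≤ C) :
    IntervalIntegrable (fun s => f s * g (x - s)) volume 0 x := by
  have intervalIntegrable_of_loc {h : ℝ → ℝ} (hh : LocallyIntegrableOn h (Set.Ici 0)) :
      IntervalIntegrable h volume 0 x :=
    (intervalIntegrable_iff_integrableOn_Icc_of_le hx).2
      (hh.integrableOn_compact_subset Set.Icc_subset_Ici_self isCompact_Icc)
  have hf' := intervalIntegrable_of_loc hf
  have hg' : IntervalIntegrable (fun s => g (x - s)) volume 0 x := by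
    simpa using ((intervalIntegrable_of_loc hg).comp_sub_left x).symm
  rw [intervalIntegrable_iff_integrableOn_Ioc_of_le hx] at hf' hg' ⊢
  refine hg'.bdd_mul (c := C) hf'.aestronglyMeasurable ?_
  filter_upwards [ae_restrict_mem measurableSet_Ioc] with s hs
  exact hfC s (Set.Ioc_subset_Icc_self hs)

lemma conv_add_add {C₁ C₂ : ℝ} (hx : 0 ≤ x)
    (hf₁ : LocallyIntegrableOn f₁ (Set.Ici 0)) (hf₂ : LocallyIntegrableOn f₂ (Set.Ici 0))
    (hg₁ : LocallyIntegrableOn g₁ (Set.Ici 0)) (hg₂ : LocallyIntegrableOn g₂ (Set.Ici 0))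
    (hC₁ : ∀ s ∈ Set.Icc 0 x, |f₁ s| ≤ C₁) (hC₂ : ∀ s ∈ Set.Icc 0 x, |f₂ s| ≤ C₂) :
    conv (f₁ + f₂) (g₁ + g₂) x =
      conv f₁ g₁ x + conv f₁ g₂ x + (conv f₂ g₁ x + conv f₂ g₂ x) := by
  have hg := hg₁.add hg₂
  rw [conv_add_left (intervalIntegrable_mul_comp_sub hx hf₁ hg hC₁)
      (intervalIntegrable_mul_comp_sub hx hf₂ hg hC₂),
    conv_add_right (intervalIntegrable_mul_comp_sub hx hf₁ hg₁ hC₁)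
      (intervalIntegrable_mul_comp_sub hx hf₁ hg₂ hC₁),
    conv_add_right (intervalIntegrable_mul_comp_sub hx hf₂ hg₁ hC₂)
      (intervalIntegrable_mul_comp_sub hx hf₂ hg₂ hC₂)]

lemma conv_eq_integral_Ioi_sub (hx : 0 ≤ x)
    (hint : IntegrableOn (fun s => f s * g (x - s)) (Set.Ioi 0)) :
    conv f g x =
      (∫ s in Set.Ioi 0, f s * g (x - s)) - ∫ u in Set.Ioi 0, f (x + u) * g (-u) := by
  have htail : ∫ s in Set.Ioi x, f s * g (x - s) = ∫ u in Set.Ioi 0, f (x + u) * g (-u) := by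
    simp only [integral_Ioi_eq_integral_Ioi_zero_comp_add _ x, sub_add_cancel_left]
  rw [← htail, eq_sub_iff_add_eq]
  exact intervalIntegral.integral_interval_add_Ioi hint (hint.mono_set (Set.Ioi_subset_Ioi hx))

end Convolution

lemma eval_eq_sum_fin {R : Type*} [Semiring R] {K : ℕ} {p : R[X]} (hp : p.degree < K) (x : R) :
    p.eval x = ∑ i : Fin K, p.coeff i * x ^ (i : ℕ) := by
  rw [eval_eq_sum, sum_fin (fun i a => a * x ^ i) (by simp) hp]

section PolynomialConvolution

variable {K₁ K₂ : ℕ} {p₁ p₂ : ℝ[X]}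

-- Homogeneity: substitute `s = x t`. The constant is the Beta value `i! j! / (i + j + 1)!`.
lemma conv_pow_pow (i j : ℕ) (x : ℝ) :
    conv (· ^ i) (· ^ j) x = conv (· ^ i) (· ^ j) 1 * x ^ (i + j + 1) := by
  have hscale := intervalIntegral.mul_integral_comp_mul_left (a := 0) (b := 1)
    (f := fun s => s ^ i * (x - s) ^ j) x
  simp only [mul_zero, mul_one] at hscale
  simp only [conv]
  rw [← hscale, ← intervalIntegral.integral_const_mul, ← intervalIntegral.integral_mul_const]
  refine intervalIntegral.integral_congr fun t _ => ?_
  simp only [← mul_one_sub, mul_pow]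
  ring

lemma conv_eval_eval_eq_sum (hp₁ : p₁.degree < K₁) (hp₂ : p₂.degree < K₂) (x : ℝ) :
    conv (p₁.eval ·) (p₂.eval ·) x = ∑ i : Fin K₁, ∑ j : Fin K₂,
      p₁.coeff i * p₂.coeff j * conv (· ^ (i : ℕ)) (· ^ (j : ℕ)) x := by
  simp only [conv, eval_eq_sum_fin hp₁, eval_eq_sum_fin hp₂, Finset.sum_mul_sum]
  rw [intervalIntegral.integral_finsetSum fun i _ =>
    Continuous.intervalIntegrable (by fun_prop) _ _]
  refine Finset.sum_congr rfl fun i _ => ?_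
  rw [intervalIntegral.integral_finsetSum fun j _ =>
    Continuous.intervalIntegrable (by fun_prop) _ _]
  refine Finset.sum_congr rfl fun j _ => ?_
  rw [← intervalIntegral.integral_const_mul]
  simp only [mul_mul_mul_comm]

lemma exists_conv_eval_eval_eq_eval (hp₁ : p₁.degree < K₁) (hp₂ : p₂.degree < K₂) :
    ∃ q : ℝ[X], q.degree < ↑(K₁ + K₂) ∧ ∀ x, conv (p₁.eval ·) (p₂.eval ·) x = q.eval x := by
  refine ⟨∑ i : Fin K₁, ∑ j : Fin K₂,
    C (p₁.coeff i * p₂.coeff j * conv (· ^ (i : ℕ)) (· ^ (j : ℕ)) 1) * X ^ (i + j + 1 : ℕ),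
    ?_, fun x => ?_⟩
  · refine mem_degreeLT.1 (sum_mem fun i _ => sum_mem fun j _ => mem_degreeLT.2 ?_)
    refine (degree_C_mul_X_pow_le _ _).trans_lt ?_
    exact_mod_cast (by omega : (i + j + 1 : ℕ) < K₁ + K₂)
  · rw [conv_eval_eval_eq_sum hp₁ hp₂]
    simp only [conv_pow_pow _ _ x, eval_finsetSum, eval_mul, eval_C, eval_pow, eval_X, mul_assoc]

end PolynomialConvolution

section ExpPoly

variable {a : ℝ} {p : ℝ[X]} {K : ℕ}

lemma continuous_expPoly (a : ℝ) (p : ℝ[X]) : Continuous (expPoly a p) := by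
  unfold expPoly
  fun_prop

lemma locallyIntegrableOn_expPoly (a : ℝ) (p : ℝ[X]) :
    LocallyIntegrableOn (expPoly a p) (Set.Ici 0) :=
  (continuous_expPoly a p).locallyIntegrable.locallyIntegrableOn _

lemma expPoly_add (a : ℝ) (p q : ℝ[X]) : expPoly a (p + q) = expPoly a p + expPoly a q := by
  funext x
  simp only [expPoly, eval_add, add_mul, Pi.add_apply]

lemma expPoly_neg_apply (a : ℝ) (p : ℝ[X]) (x : ℝ) :
    expPoly a p (-x) = expPoly (-a) (p.comp (-X)) x := by
  simp [expPoly]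

lemma expPoly_mul_expPoly (a b : ℝ) (p q : ℝ[X]) (x : ℝ) :
    expPoly a p x * expPoly b q x = expPoly (a + b) (p * q) x := by
  simp only [expPoly, eval_mul, add_mul, exp_add, mul_mul_mul_comm]

lemma exists_conv_expPoly_expPoly_eq {K₁ K₂ : ℕ} {p₁ p₂ : ℝ[X]} (a : ℝ)
    (hp₁ : p₁.degree < K₁) (hp₂ : p₂.degree < K₂) :
    ∃ q : ℝ[X], q.degree < ↑(K₁ + K₂) ∧ conv (expPoly a p₁) (expPoly a p₂) = expPoly a q := by
  obtain ⟨q, hq, hconv⟩ := exists_conv_eval_eval_eq_eval hp₁ hp₂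
  refine ⟨q, hq, funext fun x => ?_⟩
  rw [expPoly, ← hconv, conv, conv, ← intervalIntegral.integral_mul_const]
  refine intervalIntegral.integral_congr fun s _ => ?_
  have hexp : exp (a * x) = exp (a * s) * exp (a * (x - s)) := by rw [← exp_add]; ring_nf
  simp only [expPoly, hexp]
  ring

lemma expPoly_sub_eq_sum (hp : p.degree < K) (a x s : ℝ) :
    expPoly a p (x - s) = ∑ m : Fin K,
      expPoly (-a) ((hasseDeriv m p).comp (-X)) s * (x ^ (m : ℕ) * exp (a * x)) := by
  have htaylor : p.eval (x - s) =
      ∑ m : Fin K, ((hasseDeriv m p).comp (-X)).eval s * x ^ (m : ℕ) := by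
    rw [sub_eq_add_neg, ← taylor_eval, eval_eq_sum_fin ((degree_taylor p (-s)).trans_lt hp)]
    simp only [taylor_coeff, eval_comp, eval_neg, eval_X]
  have hexp : exp (a * (x - s)) = exp (-a * s) * exp (a * x) := by rw [← exp_add]; ring_nf
  simp only [expPoly, htaylor, hexp, Finset.sum_mul]
  exact Finset.sum_congr rfl fun m _ => by ring

section Moments

variable {μ : Measure ℝ} {w : ℝ → ℝ}

lemma integrable_mul_expPoly_comp_sub
    (hw : ∀ q : ℝ[X], Integrable (fun s => w s * expPoly (-a) q s) μ) (p : ℝ[X]) (x : ℝ) :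
    Integrable (fun s => w s * expPoly a p (x - s)) μ := by
  have hp : p.degree < ↑(p.natDegree + 1) :=
    degree_le_natDegree.trans_lt (by exact_mod_cast p.natDegree.lt_succ_self)
  simp only [expPoly_sub_eq_sum hp, Finset.mul_sum, ← mul_assoc]
  exact integrable_finsetSum _ fun m _ => ((hw _).mul_const _).mul_const _

lemma exists_integral_mul_expPoly_sub_eq
    (hw : ∀ q : ℝ[X], Integrable (fun s => w s * expPoly (-a) q s) μ) (hp : p.degree < K) :
    ∃ q : ℝ[X], q.degree < K ∧ ∀ x, ∫ s, w s * expPoly a p (x - s) ∂μ = expPoly a q x := by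
  refine ⟨∑ m : Fin K, C (∫ s, w s * expPoly (-a) ((hasseDeriv m p).comp (-X)) s ∂μ) *
    X ^ (m : ℕ), degree_sum_fin_lt _, fun x => ?_⟩
  simp only [expPoly_sub_eq_sum hp, Finset.mul_sum, ← mul_assoc]
  rw [integral_finsetSum _ fun m _ => ((hw _).mul_const _).mul_const _]
  simp only [integral_mul_const]
  rw [expPoly, eval_finsetSum, Finset.sum_mul]
  simp only [eval_mul, eval_C, eval_pow, eval_X]

end Moments

lemma integrableOn_expPoly_Ioi (ha : a < 0) (p : ℝ[X]) :
    IntegrableOn (expPoly a p) (Set.Ioi 0) := by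
  have hpoly : (p.eval ·) =O[Filter.atTop] fun x => exp (-a / 2 * x) :=
    (isBigO_atTop_of_degree_le p (X ^ p.natDegree) (by simp)).trans
      (by simpa using (isLittleO_pow_exp_pos_mul_atTop p.natDegree (by linarith)).isBigO)
  refine integrable_of_isBigO_exp_neg (b := -a / 2) (by linarith)
    (continuous_expPoly a p).continuousOn ?_
  refine (hpoly.mul (Asymptotics.isBigO_refl (fun x => exp (a * x)) _)).congr_right fun x => ?_
  rw [← exp_add]
  ring_nf

lemma integrableOn_weight_mul_expPoly {b : ℝ} (hba : b < a) (n : ℕ) (p : ℝ[X]) :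
    IntegrableOn (fun u => (u + 1) ^ n * exp (b * u) * expPoly (-a) p u) (Set.Ioi 0) := by
  have hweight (u : ℝ) : (u + 1) ^ n * exp (b * u) = expPoly b ((X + 1) ^ n) u := by
    simp [expPoly]
  simp only [hweight, expPoly_mul_expPoly]
  exact integrableOn_expPoly_Ioi (by linarith) _

end ExpPoly

namespace ExpPolyBounded

variable {b : ℝ} {m n : ℕ} {r r₁ r₂ g : ℝ → ℝ}

lemma add (h₁ : ExpPolyBounded b n r₁) (h₂ : ExpPolyBounded b n r₂) :
    ExpPolyBounded b n (r₁ + r₂) := by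
  obtain ⟨c₁, hc₁, hr₁⟩ := h₁
  obtain ⟨c₂, hc₂, hr₂⟩ := h₂
  refine ⟨c₁ + c₂, add_nonneg hc₁ hc₂, fun x hx => ?_⟩
  calc |r₁ x + r₂ x| ≤ |r₁ x| + |r₂ x| := abs_add_le _ _
    _ ≤ _ := add_le_add (hr₁ x hx) (hr₂ x hx)
    _ = (c₁ + c₂) * (x + 1) ^ n * exp (b * x) := by ring

lemma mono (hmn : m ≤ n) (h : ExpPolyBounded b m r) : ExpPolyBounded b n r := by
  obtain ⟨c, hc, hr⟩ := h
  refine ⟨c, hc, fun x hx => (hr x hx).trans ?_⟩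
  gcongr
  linarith

lemma exists_forall_mem_Icc_abs_le (h : ExpPolyBounded b n r) (x : ℝ) :
    ∃ C, ∀ s ∈ Set.Icc 0 x, |r s| ≤ C := by
  obtain ⟨c, -, hr⟩ := h
  obtain ⟨C, hC⟩ := (isCompact_Icc (a := 0) (b := x)).exists_bound_of_continuousOn
    (f := fun s => c * (s + 1) ^ n * exp (b * s)) (by fun_prop)
  exact ⟨C, fun s hs => (hr s hs.1).trans ((le_abs_self _).trans (hC s hs))⟩

lemma integrableOn_mul (h : ExpPolyBounded b n r)
    (hr : AEStronglyMeasurable r (volume.restrict (Set.Ioi 0)))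
    (hg : IntegrableOn (fun u => (u + 1) ^ n * exp (b * u) * g u) (Set.Ioi 0)) :
    IntegrableOn (fun u => r u * g u) (Set.Ioi 0) := by
  obtain ⟨c, -, hrc⟩ := h
  have hweight {u : ℝ} (hu : u ∈ Set.Ioi 0) : 0 < (u + 1) ^ n * exp (b * u) := by
    have : 0 < u := hu
    positivity
  have hmeas : AEStronglyMeasurable (fun u => r u / ((u + 1) ^ n * exp (b * u)))
      (volume.restrict (Set.Ioi 0)) :=
    (hr.aemeasurable.div (by fun_prop)).aestronglyMeasurable
  have hquot : ∀ᵐ u ∂volume.restrict (Set.Ioi 0), ‖r u / ((u + 1) ^ n * exp (b * u))‖ ≤ c := by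
    filter_upwards [ae_restrict_mem measurableSet_Ioi] with u hu
    rw [norm_eq_abs, abs_div, abs_of_pos (hweight hu), div_le_iff₀ (hweight hu), ← mul_assoc]
    exact hrc u (le_of_lt hu)
  refine (hg.bdd_mul hmeas hquot).congr ?_
  filter_upwards [ae_restrict_mem measurableSet_Ioi] with u hu
  rw [← mul_assoc, div_mul_cancel₀ _ (hweight hu).ne']

lemma integral_comp_add_mul (h : ExpPolyBounded b n r)
    (hg : IntegrableOn (fun u => (u + 1) ^ n * exp (b * u) * g u) (Set.Ioi 0)) :
    ExpPolyBounded b n (fun x => ∫ u in Set.Ioi 0, r (x + u) * g u) := by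
  obtain ⟨c, hc, hr⟩ := h
  refine ⟨c * ∫ u in Set.Ioi 0, ‖(u + 1) ^ n * exp (b * u) * g u‖,
    mul_nonneg hc (integral_nonneg fun _ => norm_nonneg _), fun x hx => ?_⟩
  have hshift {u : ℝ} (hu : 0 ≤ u) :
      |r (x + u)| ≤ c * (x + 1) ^ n * exp (b * x) * ((u + 1) ^ n * exp (b * u)) := by
    have hsubmul : x + u + 1 ≤ (x + 1) * (u + 1) := by nlinarith [mul_nonneg hx hu]
    calc |r (x + u)| ≤ c * (x + u + 1) ^ n * exp (b * (x + u)) := hr _ (by positivity)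
      _ ≤ c * ((x + 1) * (u + 1)) ^ n * exp (b * (x + u)) := by gcongr
      _ = _ := by rw [mul_pow, mul_add, exp_add]; ring
  have hpointwise : ∀ᵐ u ∂volume.restrict (Set.Ioi 0), ‖r (x + u) * g u‖ ≤
      c * (x + 1) ^ n * exp (b * x) * ‖(u + 1) ^ n * exp (b * u) * g u‖ := by
    filter_upwards [ae_restrict_mem measurableSet_Ioi] with u hu
    have hu : 0 < u := hu
    rw [norm_mul, norm_mul, norm_of_nonneg (by positivity : 0 ≤ (u + 1) ^ n * exp (b * u)),
      ← mul_assoc]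
    exact mul_le_mul_of_nonneg_right (hshift hu.le) (norm_nonneg _)
  calc |∫ u in Set.Ioi 0, r (x + u) * g u|
      ≤ ∫ u in Set.Ioi 0, c * (x + 1) ^ n * exp (b * x) * ‖(u + 1) ^ n * exp (b * u) * g u‖ :=
        norm_integral_le_of_norm_le (hg.norm.const_mul _) hpointwise
    _ = _ := by rw [integral_const_mul]; ring

end ExpPolyBounded

lemma expPolyBounded_conv {b : ℝ} {n₁ n₂ : ℕ} {r₁ r₂ : ℝ → ℝ} (h₁ : ExpPolyBounded b n₁ r₁)
    (h₂ : ExpPolyBounded b n₂ r₂) : ExpPolyBounded b (n₁ + n₂ + 1) (conv r₁ r₂) := by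
  obtain ⟨c₁, hc₁, hr₁⟩ := h₁
  obtain ⟨c₂, hc₂, hr₂⟩ := h₂
  refine ⟨c₁ * c₂, mul_nonneg hc₁ hc₂, fun x hx => ?_⟩
  have hpointwise : ∀ s ∈ Set.uIoc 0 x,
      ‖r₁ s * r₂ (x - s)‖ ≤ c₁ * c₂ * (x + 1) ^ (n₁ + n₂) * exp (b * x) := by
    intro s hs
    obtain ⟨hs0, hsx⟩ : 0 < s ∧ s ≤ x := by rwa [Set.uIoc_of_le hx] at hs
    have hxs : 0 ≤ x - s := sub_nonneg.2 hsx
    calc ‖r₁ s * r₂ (x - s)‖ = |r₁ s| * |r₂ (x - s)| := abs_mul _ _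
      _ ≤ (c₁ * (s + 1) ^ n₁ * exp (b * s)) *
          (c₂ * (x - s + 1) ^ n₂ * exp (b * (x - s))) :=
        mul_le_mul (hr₁ s hs0.le) (hr₂ _ hxs) (abs_nonneg _) (by positivity)
      _ ≤ (c₁ * (x + 1) ^ n₁ * exp (b * s)) * (c₂ * (x + 1) ^ n₂ * exp (b * (x - s))) := by
        gcongr
        linarith
      _ = c₁ * c₂ * (x + 1) ^ (n₁ + n₂) * (exp (b * s) * exp (b * (x - s))) := by ring
      _ = _ := by rw [← exp_add]; ring_nf
  calc |conv r₁ r₂ x| ≤ c₁ * c₂ * (x + 1) ^ (n₁ + n₂) * exp (b * x) * |x - 0| :=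
        intervalIntegral.norm_integral_le_of_norm_le_const hpointwise
    _ ≤ c₁ * c₂ * (x + 1) ^ (n₁ + n₂) * exp (b * x) * (x + 1) := by
        rw [sub_zero, abs_of_nonneg hx]
        gcongr
        linarith
    _ = c₁ * c₂ * (x + 1) ^ (n₁ + n₂ + 1) * exp (b * x) := by ring

namespace HasExpPolyAsymptotics

variable {a b : ℝ} {K K' n n' : ℕ} {f g : ℝ → ℝ}

lemma add (hf : HasExpPolyAsymptotics a b K n f) (hg : HasExpPolyAsymptotics a b K n g) :
    HasExpPolyAsymptotics a b K n (f + g) := by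
  obtain ⟨p, hp, hfp⟩ := hf
  obtain ⟨q, hq, hgq⟩ := hg
  refine ⟨p + q, mem_degreeLT.1 (add_mem (mem_degreeLT.2 hp) (mem_degreeLT.2 hq)), ?_⟩
  rw [expPoly_add, add_sub_add_comm]
  exact hfp.add hgq

lemma mono (hK : K ≤ K') (hn : n ≤ n') (h : HasExpPolyAsymptotics a b K n f) :
    HasExpPolyAsymptotics a b K' n' f := by
  obtain ⟨p, hp, hfp⟩ := h
  exact ⟨p, hp.trans_le (by exact_mod_cast hK), hfp.mono hn⟩

lemma exists_eq_add_expPoly (hf : LocallyIntegrableOn f (Set.Ici 0))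
    (h : HasExpPolyAsymptotics a b K n f) :
    ∃ (p : ℝ[X]) (r : ℝ → ℝ), p.degree < K ∧ LocallyIntegrableOn r (Set.Ici 0) ∧
      ExpPolyBounded b n r ∧ f = r + expPoly a p := by
  obtain ⟨p, hp, hr⟩ := h
  exact ⟨p, f - expPoly a p, hp, hf.sub (locallyIntegrableOn_expPoly a p), hr,
    (sub_add_cancel f _).symm⟩

lemma congr (h : HasExpPolyAsymptotics a b K n f) (hfg : Set.EqOn g f (Set.Ici 0)) :
    HasExpPolyAsymptotics a b K n g := by
  obtain ⟨p, hp, c, hc, hfp⟩ := h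
  refine ⟨p, hp, c, hc, fun x hx => ?_⟩
  rw [Pi.sub_apply, hfg hx]
  exact hfp x hx

end HasExpPolyAsymptotics

section ConvolutionAsymptotics

variable {a b : ℝ} {K n : ℕ} {p : ℝ[X]} {r : ℝ → ℝ}

lemma ExpPolyBounded.hasExpPolyAsymptotics (h : ExpPolyBounded b n r) (a : ℝ) (K : ℕ) :
    HasExpPolyAsymptotics a b K n r := by
  refine ⟨0, by simp, ?_⟩
  have hzero : expPoly a 0 = 0 := by funext x; simp [expPoly]
  rwa [hzero, sub_zero]

lemma hasExpPolyAsymptotics_expPoly (hp : p.degree < K) (a b : ℝ) (n : ℕ) :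
    HasExpPolyAsymptotics a b K n (expPoly a p) :=
  ⟨p, hp, 0, le_rfl, by simp⟩

lemma ExpPolyBounded.hasExpPolyAsymptotics_conv_expPoly (hba : b < a)
    (hr : LocallyIntegrableOn r (Set.Ici 0)) (h : ExpPolyBounded b n r) (hp : p.degree < K) :
    HasExpPolyAsymptotics a b K n (conv r (expPoly a p)) := by
  have hmoments (q : ℝ[X]) : IntegrableOn (fun s => r s * expPoly (-a) q s) (Set.Ioi 0) :=
    h.integrableOn_mul (hr.mono_set Set.Ioi_subset_Ici_self).aestronglyMeasurable
      (integrableOn_weight_mul_expPoly hba n q)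
  obtain ⟨q, hq, hfull⟩ := exists_integral_mul_expPoly_sub_eq hmoments hp
  obtain ⟨c, hc, htail⟩ := h.integral_comp_add_mul
    (integrableOn_weight_mul_expPoly hba n (p.comp (-X)))
  refine ⟨q, hq, c, hc, fun x hx => ?_⟩
  rw [Pi.sub_apply, conv_eq_integral_Ioi_sub hx (integrable_mul_expPoly_comp_sub hmoments p x),
    hfull, sub_sub_cancel_left, abs_neg]
  simp only [expPoly_neg_apply]
  exact htail x hx

end ConvolutionAsymptotics

theorem memFR_conv_general {a b : ℝ} (hba : b < a) {K₁ K₂ n₁ n₂ : ℕ} {f₁ f₂ : ℝ → ℝ}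
    (hf₁ : LocallyIntegrableOn f₁ (Set.Ici 0)) (hf₂ : LocallyIntegrableOn f₂ (Set.Ici 0))
    (h₁ : HasExpPolyAsymptotics a b K₁ n₁ f₁) (h₂ : HasExpPolyAsymptotics a b K₂ n₂ f₂) :
    HasExpPolyAsymptotics a b (K₁ + K₂) (n₁ + n₂ + 1) (conv f₁ f₂) := by
  obtain ⟨p₁, r₁, hp₁, hr₁, hr₁b, rfl⟩ := h₁.exists_eq_add_expPoly hf₁
  obtain ⟨p₂, r₂, hp₂, hr₂, hr₂b, rfl⟩ := h₂.exists_eq_add_expPoly hf₂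
  have hexpand : Set.EqOn (conv (r₁ + expPoly a p₁) (r₂ + expPoly a p₂))
      (conv r₁ r₂ + conv r₁ (expPoly a p₂) +
        (conv (expPoly a p₁) r₂ + conv (expPoly a p₁) (expPoly a p₂))) (Set.Ici 0) := by
    intro x hx
    obtain ⟨C₁, hC₁⟩ := hr₁b.exists_forall_mem_Icc_abs_le x
    obtain ⟨C₂, hC₂⟩ := isCompact_Icc.exists_bound_of_continuousOn
      (continuous_expPoly a p₁).continuousOn
    exact conv_add_add hx hr₁ (locallyIntegrableOn_expPoly a p₁) hr₂
      (locallyIntegrableOn_expPoly a p₂) hC₁ hC₂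
  obtain ⟨q, hq, hmain⟩ := exists_conv_expPoly_expPoly_eq a hp₁ hp₂
  have hremainders := (expPolyBounded_conv hr₁b hr₂b).hasExpPolyAsymptotics a (K₁ + K₂)
  have hmixed₁ := hr₁b.hasExpPolyAsymptotics_conv_expPoly hba hr₁ hp₂
  have hmixed₂ := hr₂b.hasExpPolyAsymptotics_conv_expPoly hba hr₂ hp₁
  rw [conv_comm (expPoly a p₁) r₂, hmain] at hexpand
  refine .congr ?_ hexpand
  exact (hremainders.add (hmixed₁.mono (by lia) (by lia))).add
    ((hmixed₂.mono (by lia) (by lia)).add (hasExpPolyAsymptotics_expPoly hq a b _))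

/-- Stability of the Friedman–Ramanujan property by convolution:
if `f₁ ∈ ℱ^{K₁,N₁}` and `f₂ ∈ ℱ^{K₂,N₂}` then `f₁ * f₂ ∈ ℱ^{K₁+K₂,N₁+N₂}`. -/
theorem memFR_conv (K₁ K₂ N₁ N₂ : ℕ) (hN₁ : 1 ≤ N₁) (hN₂ : 1 ≤ N₂) (f₁ f₂ : ℝ → ℝ)
    (hf₁ : LocallyIntegrableOn f₁ (Set.Ici (0:ℝ)))
    (hf₂ : LocallyIntegrableOn f₂ (Set.Ici (0:ℝ)))
    (h₁ : MemFR K₁ N₁ f₁) (h₂ : MemFR K₂ N₂ f₂) :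
    MemFR (K₁ + K₂) (N₁ + N₂) (conv f₁ f₂) := by
  obtain ⟨n₁, rfl⟩ := Nat.exists_eq_add_of_le' hN₁
  obtain ⟨n₂, rfl⟩ := Nat.exists_eq_add_of_le' hN₂
  rw [add_add_add_comm]
  exact memFR_succ_iff.2
    (memFR_conv_general (by norm_num) hf₁ hf₂ (memFR_succ_iff.1 h₁) (memFR_succ_iff.1 h₂))
end
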